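/- For q ≥ 2, the four subspaces V_r, V_l, V_[adj] and V_{adj} are invariant under φ⊗² and carry pairwise equivalent irreducible subrepresentations of φ⊗² (all equivalent to the adjoint representation of the Clifford group). -/

import Mathlib

open Matrix MeasureTheory
open scoped Kronecker

noncomputable section

namespace CliffordPaper

/-- The single-qubit Pauli matrices `1, X, Y, Z`. -/
def pauli1 : Fin 4 → Matrix (Fin 2) (Fin 2) ℂ :=
  ![1, !![0, 1; 1, 0], !![0, -Complex.I; Complex.I, 0], !![1, 0; 0, -1]]

/-- Index type for the computational basis of `q` qubits. -/
abbrev Idx (q : ℕ) := Fin q → Fin 2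

/-- The space `M_d` of `d × d` complex matrices, `d = 2^q`. -/
abbrev Mat (q : ℕ) := Matrix (Idx q) (Idx q) ℂ

/-- The space `M_d ⊗ M_d`, realized as matrices indexed by the product index set
(the tensor factors combine via the Kronecker product `⊗ₖ`). -/
abbrev BMat (q : ℕ) := Matrix (Idx q × Idx q) (Idx q × Idx q) ℂ

/-- The `q`-fold Kronecker product of single-qubit Paulis with labels `a`. -/
def PauliOp {q : ℕ} (a : Fin q → Fin 4) : Mat q :=
  Matrix.of fun x y => ∏ i, pauli1 (a i) (x i) (y i)

/-- `√d` as a complex number, where `d = 2^q`. -/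
def sqrtd (q : ℕ) : ℂ := (Real.sqrt (2 ^ q) : ℝ)

/-- The set `σ̂_q` of normalized Pauli operators. -/
def sigmaHat (q : ℕ) : Set (Mat q) :=
  {M | ∃ a : Fin q → Fin 4, M = (sqrtd q)⁻¹ • PauliOp a}

/-- The normalized identity `σ₀ = 1/√d`. -/
def sigma0 (q : ℕ) : Mat q := (sqrtd q)⁻¹ • (1 : Mat q)

/-- `σ_q = σ̂_q \ {σ₀}`. -/
def sigmaSet (q : ℕ) : Set (Mat q) := sigmaHat q \ {sigma0 q}

/-- `N_τ`: the normalized nonidentity Paulis anticommuting with `τ`. -/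
def NSet {q : ℕ} (τ : Mat q) : Set (Mat q) :=
  {σ | σ ∈ sigmaSet q ∧ σ * τ + τ * σ = 0}

/-- `C_τ`: the normalized nonidentity Paulis distinct from `τ` commuting with `τ`. -/
def CSet {q : ℕ} (τ : Mat q) : Set (Mat q) :=
  {σ | σ ∈ sigmaSet q ∧ σ ≠ τ ∧ σ * τ = τ * σ}

/-- `Ĉ_τ`: the normalized Paulis commuting with `τ`. -/
def CHatSet {q : ℕ} (τ : Mat q) : Set (Mat q) :=
  {σ | σ ∈ sigmaHat q ∧ σ * τ = τ * σ}

/-- The normalized product `σ·τ = √d στ`. -/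
def nprod {q : ℕ} (σ τ : Mat q) : Mat q := sqrtd q • (σ * τ)

/-- The Clifford normalizer `𝒩_q`: unitaries mapping normalized Paulis to
signed normalized Paulis under conjugation. -/
def Cliff (q : ℕ) : Set (Mat q) :=
  {U | U ∈ Matrix.unitaryGroup (Idx q) ℂ ∧
    ∀ σ ∈ sigmaHat q, ∃ τ ∈ sigmaHat q, U * σ * Uᴴ = τ ∨ U * σ * Uᴴ = -τ}

/-- The two-copy representation `φ⊗²(U) : A ⊗ B ↦ (UAU†) ⊗ (UBU†)`, extended linearly. -/
def twoCopy {q : ℕ} (U : Mat q) : BMat q →ₗ[ℂ] BMat q where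
  toFun M := (U ⊗ₖ U) * M * (U ⊗ₖ U)ᴴ
  map_add' M N := by
    show (U ⊗ₖ U) * (M + N) * (U ⊗ₖ U)ᴴ = (U ⊗ₖ U) * M * (U ⊗ₖ U)ᴴ + (U ⊗ₖ U) * N * (U ⊗ₖ U)ᴴ
    rw [Matrix.mul_add, Matrix.add_mul]
  map_smul' c M := by
    show (U ⊗ₖ U) * (c • M) * (U ⊗ₖ U)ᴴ = c • ((U ⊗ₖ U) * M * (U ⊗ₖ U)ᴴ)
    rw [Matrix.mul_smul, Matrix.smul_mul]

/-- The Hilbert–Schmidt inner product `⟨A, B⟩ = tr(A† B)`. -/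
def hs {q : ℕ} (A B : BMat q) : ℂ := (Aᴴ * B).trace

/-- A subspace is invariant under the two-copy representation of `𝒩_q`. -/
def IsInvariant (q : ℕ) (W : Submodule ℂ (BMat q)) : Prop :=
  ∀ U ∈ Cliff q, ∀ v ∈ W, twoCopy U v ∈ W

/-- A nonzero invariant subspace carries an irreducible subrepresentation. -/
def CarriesIrred (q : ℕ) (W : Submodule ℂ (BMat q)) : Prop :=
  W ≠ ⊥ ∧ IsInvariant q W ∧ ∀ W' ≤ W, IsInvariant q W' → W' = ⊥ ∨ W' = W

/-- Two invariant subspaces carry equivalent subrepresentations: there is a linear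
isomorphism between them intertwining the two-copy representation. -/
def EquivRep (q : ℕ) (W W' : Submodule ℂ (BMat q)) : Prop :=
  ∃ T : BMat q →ₗ[ℂ] BMat q, Submodule.map T W = W' ∧
    (∀ x ∈ W, T x = 0 → x = 0) ∧
    ∀ U ∈ Cliff q, ∀ x ∈ W, T (twoCopy U x) = twoCopy U (T x)

/-- `S_{σ,τ} = (σ⊗τ + τ⊗σ)/√2`. -/
def SVec {q : ℕ} (σ τ : Mat q) : BMat q :=
  ((Real.sqrt 2 : ℂ))⁻¹ • (σ ⊗ₖ τ + τ ⊗ₖ σ)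

/-- `A_{σ,τ} = (σ⊗τ − τ⊗σ)/√2`. -/
def AVec {q : ℕ} (σ τ : Mat q) : BMat q :=
  ((Real.sqrt 2 : ℂ))⁻¹ • (σ ⊗ₖ τ - τ ⊗ₖ σ)

/-- The trivial sector `V_id`. -/
def Vid (q : ℕ) : Submodule ℂ (BMat q) :=
  Submodule.span ℂ {sigma0 q ⊗ₖ sigma0 q}

/-- The right adjoint sector `V_r`. -/
def Vr (q : ℕ) : Submodule ℂ (BMat q) :=
  Submodule.span ℂ {M | ∃ τ ∈ sigmaSet q, M = sigma0 q ⊗ₖ τ}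

/-- The left adjoint sector `V_l`. -/
def Vl (q : ℕ) : Submodule ℂ (BMat q) :=
  Submodule.span ℂ {M | ∃ τ ∈ sigmaSet q, M = τ ⊗ₖ sigma0 q}

/-- The diagonal sector `V_d`. -/
def Vdiag (q : ℕ) : Submodule ℂ (BMat q) :=
  Submodule.span ℂ {M | ∃ τ ∈ sigmaSet q, M = τ ⊗ₖ τ}

/-- The symmetric commuting sector `V_[S]`. -/
def VScom (q : ℕ) : Submodule ℂ (BMat q) :=
  Submodule.span ℂ {M | ∃ τ ∈ sigmaSet q, ∃ σ ∈ CSet τ, M = SVec σ τ}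

/-- The symmetric anti-commuting sector `V_{S}`. -/
def VSanti (q : ℕ) : Submodule ℂ (BMat q) :=
  Submodule.span ℂ {M | ∃ τ ∈ sigmaSet q, ∃ σ ∈ NSet τ, M = SVec σ τ}

/-- The antisymmetric commuting sector `V_[A]`. -/
def VAcom (q : ℕ) : Submodule ℂ (BMat q) :=
  Submodule.span ℂ {M | ∃ τ ∈ sigmaSet q, ∃ σ ∈ CSet τ, M = AVec σ τ}

/-- The antisymmetric anti-commuting sector `V_{A}`. -/
def VAanti (q : ℕ) : Submodule ℂ (BMat q) :=
  Submodule.span ℂ {M | ∃ τ ∈ sigmaSet q, ∃ σ ∈ NSet τ, M = AVec σ τ}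

/-- `V_[A]` presented with the spanning vectors `A_{σ,σ·τ}`, `σ ∈ C_τ`. -/
def VAcom' (q : ℕ) : Submodule ℂ (BMat q) :=
  Submodule.span ℂ {M | ∃ τ ∈ sigmaSet q, ∃ σ ∈ CSet τ, M = AVec σ (nprod σ τ)}

/-- `V_0 = span{Σ_{σ∈σ_q} σ⊗σ}`. -/
def V0diag (q : ℕ) : Submodule ℂ (BMat q) :=
  Submodule.span ℂ {∑ᶠ σ ∈ sigmaSet q, σ ⊗ₖ σ}

/-- `V_1`, the "positive" part of the diagonal sector. -/
def V1diag (q : ℕ) : Submodule ℂ (BMat q) :=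
  Submodule.span ℂ {v | ∃ lam : Mat q → ℂ,
    v = ∑ᶠ σ ∈ sigmaSet q, lam σ • (σ ⊗ₖ σ) ∧
    (∑ᶠ σ ∈ sigmaSet q, lam σ) = 0 ∧
    ∀ τ ∈ sigmaSet q, (∑ᶠ σ ∈ NSet τ, lam σ) = -((2 ^ q : ℂ) / 2) * lam τ}

/-- `V_2`, the "negative" part of the diagonal sector. -/
def V2diag (q : ℕ) : Submodule ℂ (BMat q) :=
  Submodule.span ℂ {v | ∃ lam : Mat q → ℂ,
    v = ∑ᶠ σ ∈ sigmaSet q, lam σ • (σ ⊗ₖ σ) ∧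
    (∑ᶠ σ ∈ sigmaSet q, lam σ) = 0 ∧
    ∀ τ ∈ sigmaSet q, (∑ᶠ σ ∈ NSet τ, lam σ) = ((2 ^ q : ℂ) / 2) * lam τ}

/-- `v^[adj]_τ = (2|C_τ|)^{-1/2} Σ_{σ∈C_τ} S_{σ,σ·τ}`. -/
def vadjS {q : ℕ} (τ : Mat q) : BMat q :=
  ((Real.sqrt (2 * ((CSet τ).ncard : ℝ)) : ℂ))⁻¹ • ∑ᶠ σ ∈ CSet τ, SVec σ (nprod σ τ)

/-- `v^{adj}_τ = (2|N_τ|)^{-1/2} Σ_{σ∈N_τ} A_{σ,iσ·τ}`. -/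
def vadjA {q : ℕ} (τ : Mat q) : BMat q :=
  ((Real.sqrt (2 * ((NSet τ).ncard : ℝ)) : ℂ))⁻¹ •
    ∑ᶠ σ ∈ NSet τ, AVec σ (Complex.I • nprod σ τ)

/-- The symmetric adjoint sector `V_[adj]`. -/
def VadjS (q : ℕ) : Submodule ℂ (BMat q) :=
  Submodule.span ℂ {M | ∃ τ ∈ sigmaSet q, M = vadjS τ}

/-- The antisymmetric adjoint sector `V_{adj}`. -/
def VadjA (q : ℕ) : Submodule ℂ (BMat q) :=
  Submodule.span ℂ {M | ∃ τ ∈ sigmaSet q, M = vadjA τ}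

/-- The orthogonal complement `V^⊥_{adj}` of `V_{adj}` inside `V_{A}`. -/
def VadjAperp (q : ℕ) : Submodule ℂ (BMat q) :=
  Submodule.span ℂ {v | v ∈ VAanti q ∧ ∀ w ∈ VadjA q, hs w v = 0}

/-- `V_{1}^τ`. -/
def V1symτ (q : ℕ) (τ : Mat q) : Submodule ℂ (BMat q) :=
  Submodule.span ℂ {v | ∃ lam : Mat q → ℂ,
    v = ∑ᶠ σ ∈ NSet τ, lam σ • SVec σ (Complex.I • nprod σ τ) ∧
    ∀ ν ∈ NSet τ, (∑ᶠ σ ∈ NSet τ ∩ CSet ν, lam σ) - (∑ᶠ σ ∈ NSet τ ∩ NSet ν, lam σ)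
      = ((2 ^ q : ℂ) / 2) * lam ν}

/-- `V_{2}^τ`. -/
def V2symτ (q : ℕ) (τ : Mat q) : Submodule ℂ (BMat q) :=
  Submodule.span ℂ {v | ∃ lam : Mat q → ℂ,
    v = ∑ᶠ σ ∈ NSet τ, lam σ • SVec σ (Complex.I • nprod σ τ) ∧
    ∀ ν ∈ NSet τ, (∑ᶠ σ ∈ NSet τ ∩ CSet ν, lam σ) - (∑ᶠ σ ∈ NSet τ ∩ NSet ν, lam σ)
      = -((2 ^ q : ℂ) / 2) * lam ν}

/-- `V_{1} = ⊕_τ V_{1}^τ`. -/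
def V1sym (q : ℕ) : Submodule ℂ (BMat q) := ⨆ τ ∈ sigmaSet q, V1symτ q τ

/-- `V_{2} = ⊕_τ V_{2}^τ`. -/
def V2sym (q : ℕ) : Submodule ℂ (BMat q) := ⨆ τ ∈ sigmaSet q, V2symτ q τ

/-- The defining property of the map `Θ` on `V_[A]`. -/
def ThetaProp (q : ℕ) (Θ : BMat q →ₗ[ℂ] BMat q) : Prop :=
  ∀ τ ∈ sigmaSet q, ∀ σ ∈ CSet τ,
    Θ (AVec σ (nprod σ τ)) =
      (∑ᶠ σ' ∈ NSet τ ∩ CSet σ, AVec σ' (Complex.I • nprod σ' τ)) -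
      ∑ᶠ σ' ∈ NSet τ ∩ NSet σ, AVec σ' (Complex.I • nprod σ' τ)

/-- `V` = span of off-diagonal products `σ⊗σ̂`, `σ ≠ σ̂`. -/
def Voff (q : ℕ) : Submodule ℂ (BMat q) :=
  Submodule.span ℂ {M | ∃ σ ∈ sigmaSet q, ∃ σ' ∈ sigmaSet q, σ ≠ σ' ∧ M = σ ⊗ₖ σ'}

/-- `V^τ` = span of the `σ⊗σ̂` with `σ·σ̂ ∈ {τ, −τ, iτ, −iτ}`. -/
def Vtau (q : ℕ) (τ : Mat q) : Submodule ℂ (BMat q) :=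
  Submodule.span ℂ {M | ∃ σ ∈ sigmaSet q, ∃ σ' ∈ sigmaSet q,
    (nprod σ σ' = τ ∨ nprod σ σ' = -τ ∨ nprod σ σ' = Complex.I • τ ∨
      nprod σ σ' = -(Complex.I • τ)) ∧ M = σ ⊗ₖ σ'}

/-!
For an invertible operator `M` on `ℂᵈ ⊗ ℂᵈ` commuting with every `U ⊗ U`, and scalars `s`, `t` not
both zero, the map `A ↦ M (s (1 ⊗ A) + t (A ⊗ 1))` is injective on traceless matrices and carries
conjugation by `U` to `φ⊗²(U)`. So its image is a copy of the adjoint representation, and all four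
sectors are of this form. This is immediate for `V_r` and `V_l`. For the other two, split
`SWAP = ∑ σ ⊗ σ` into the sums over the Paulis commuting and anticommuting with `τ`. The first
commutes and the second anticommutes with `1 ⊗ τ ± τ ⊗ 1`, while `SWAP` commutes with
`1 ⊗ τ + τ ⊗ 1` and anticommutes with `1 ⊗ τ - τ ⊗ 1`, so only one of the two sums survives on each.
Removing the terms `σ₀ ⊗ σ₀` and `τ ⊗ τ` from the commuting sum yields `M = SWAP - 2/d` for
`V_[adj]`, which is invertible because `SWAP² = 1` and `d ≠ 2`; for `V_{adj}` it is `M = SWAP`.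

The adjoint representation is irreducible: averaging over conjugation by Paulis isolates a single
Pauli component of any element of an invariant subspace, and for anticommuting Paulis `P`, `Q` the
Clifford unitary `(P + Q) / √2` exchanges `P` and `Q`, so any nonidentity Pauli can be moved to any
other through one that anticommutes with both.
-/

section Anticommuting

variable {K R : Type*} [CommRing K] [Ring R] [Algebra K R] {s : K} {P Q X Y : R}

lemma smul_mul_mul_smul_eq_of_eq_two_nsmul (hs : s * s * 2 = 1) (h : P * X * P = 2 • Y) :
    s • P * X * s • P = Y := by
  rw [smul_mul_assoc, smul_mul_smul_comm, h, ← ofNat_smul_eq_nsmul K, smul_smul, hs, one_smul]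

variable (hs : s * s * 2 = 1) (hP : P * P = 1) (hQ : Q * Q = 1) (hPQ : P * Q = -(Q * P))
include hs hP hQ hPQ

lemma smul_add_mul_self_of_anticommute : s • (P + Q) * s • (P + Q) = 1 := by
  have h : (P + Q) * 1 * (P + Q) = 2 • 1 := by
    linear_combination (norm := noncomm_ring) hP + hQ + hPQ
  simpa only [mul_one] using smul_mul_mul_smul_eq_of_eq_two_nsmul hs h

lemma smul_add_conj_of_anticommute : s • (P + Q) * P * s • (P + Q) = Q := by
  refine smul_mul_mul_smul_eq_of_eq_two_nsmul hs ?_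
  linear_combination (norm := noncomm_ring) hP * P + hP * Q + Q * hP + Q * hPQ - hQ * P

lemma smul_add_conj_mem_of_anticommute (hPX : P * X = X * P ∨ P * X = -(X * P))
    (hQX : Q * X = X * Q ∨ Q * X = -(X * Q)) :
    s • (P + Q) * X * s • (P + Q) ∈ ({X, -X, X * (P * Q), X * (Q * P)} : Set R) := by
  have conj_eq {Y : R} (h : (P + Q) * X * (P + Q) = 2 • Y) :
      s • (P + Q) * X * s • (P + Q) = Y := smul_mul_mul_smul_eq_of_eq_two_nsmul hs h
  rcases hPX with hPX | hPX <;> rcases hQX with hQX | hQX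
  · refine .inl (conj_eq ?_)
    linear_combination (norm := noncomm_ring)
      (hPX + hQX) * (P + Q) + X * (hP + hQ + hPQ)
  · refine .inr (.inr (.inl (conj_eq ?_)))
    linear_combination (norm := noncomm_ring)
      (hPX + hQX) * (P + Q) + X * (hP - hQ - hPQ)
  · refine .inr (.inr (.inr (conj_eq ?_)))
    linear_combination (norm := noncomm_ring)
      (hPX + hQX) * (P + Q) + X * (hQ - hP - hPQ)
  · refine .inr (.inl (conj_eq ?_))
    linear_combination (norm := noncomm_ring)
      (hPX + hQX) * (P + Q) - X * (hP + hQ + hPQ)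

end Anticommuting

section PiKronecker

variable {ι R : Type*} [Fintype ι] [CommSemiring R] {l m n : ι → Type*}

/-- The Kronecker product of a finite family of matrices, with rows and columns indexed by
choice functions. -/
def piKronecker (M : ∀ i, Matrix (m i) (n i) R) : Matrix (∀ i, m i) (∀ i, n i) R :=
  Matrix.of fun x y => ∏ i, M i (x i) (y i)

lemma piKronecker_apply (M : ∀ i, Matrix (m i) (n i) R) (x : ∀ i, m i) (y : ∀ i, n i) :
    piKronecker M x y = ∏ i, M i (x i) (y i) := rfl

lemma piKronecker_mul [DecidableEq ι] [∀ i, Fintype (m i)] (M : ∀ i, Matrix (l i) (m i) R)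
    (N : ∀ i, Matrix (m i) (n i) R) :
    piKronecker M * piKronecker N = piKronecker fun i => M i * N i := by
  ext x y
  simp only [mul_apply, piKronecker_apply, Fintype.prod_sum, Finset.prod_mul_distrib]

lemma piKronecker_smul {S : Type*} [CommMonoid S] [MulAction S R] [IsScalarTower S R R]
    [SMulCommClass S R R] (c : ι → S) (M : ∀ i, Matrix (m i) (n i) R) :
    (piKronecker fun i => c i • M i) = (∏ i, c i) • piKronecker M := by
  ext x y
  simp only [piKronecker_apply, Matrix.smul_apply, Finset.prod_smul]

lemma piKronecker_one [∀ i, DecidableEq (n i)] :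
    piKronecker (fun i => (1 : Matrix (n i) (n i) R)) = 1 := by
  classical
  ext x y
  simp only [piKronecker_apply, one_apply, Fintype.prod_ite_zero, Finset.prod_const_one,
    funext_iff]

lemma conjTranspose_piKronecker [StarRing R] (M : ∀ i, Matrix (m i) (n i) R) :
    (piKronecker M)ᴴ = piKronecker fun i => (M i)ᴴ := by
  ext x y
  simp only [conjTranspose_apply, piKronecker_apply, star_prod]

lemma trace_piKronecker [DecidableEq ι] [∀ i, Fintype (n i)] (M : ∀ i, Matrix (n i) (n i) R) :
    (piKronecker M).trace = ∏ i, (M i).trace := by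
  simp only [trace, diag_apply, piKronecker_apply, Fintype.prod_sum]

end PiKronecker

section Swap

variable (n R : Type*) [DecidableEq n] [CommRing R]

/-- The operator exchanging the two tensor factors of `Rⁿ ⊗ Rⁿ`. -/
def swapMatrix : Matrix (n × n) (n × n) R := Equiv.Perm.permMatrix R (Equiv.prodComm n n)

variable {n R}

lemma swapMatrix_apply (x y z w : n) :
    swapMatrix n R (x, y) (z, w) = if x = w ∧ y = z then 1 else 0 := by
  simp [swapMatrix, and_comm]

variable {κ : Type*} [Fintype κ] {P : κ → Matrix n n R} {c : R}

lemma sum_mul_apply_of_sum_kronecker_self (h : ∑ a, P a ⊗ₖ P a = c • swapMatrix n R)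
    (x y z w : n) : ∑ a, P a x y * P a z w = if x = w ∧ y = z then c else 0 := by
  have := congr_fun₂ h (x, z) (y, w)
  simpa [Matrix.sum_apply, swapMatrix_apply, eq_comm] using this

variable [Fintype n]

lemma swapMatrix_mul_self : swapMatrix n R * swapMatrix n R = 1 := by
  rw [swapMatrix, ← permMatrix_mul, ← permMatrix_one]
  rfl

lemma isUnit_swapMatrix : IsUnit (swapMatrix n R) := .of_mul_eq_one _ swapMatrix_mul_self

lemma swapMatrix_mul_kronecker (A B : Matrix n n R) :
    swapMatrix n R * (A ⊗ₖ B) = (B ⊗ₖ A) * swapMatrix n R := by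
  rw [swapMatrix, Equiv.Perm.permMatrix, PEquiv.toMatrix_toPEquiv_mul,
    PEquiv.mul_toMatrix_toPEquiv]
  ext ⟨x, y⟩ ⟨z, w⟩
  simp [mul_comm]

lemma commute_kronecker_self_swapMatrix (A : Matrix n n R) :
    Commute (A ⊗ₖ A) (swapMatrix n R) := (swapMatrix_mul_kronecker A A).symm

lemma sum_conj_of_sum_kronecker_self (h : ∑ a, P a ⊗ₖ P a = c • swapMatrix n R)
    (X : Matrix n n R) : ∑ a, P a * X * P a = (c * X.trace) • 1 := by
  ext x w
  calc (∑ a, P a * X * P a) x w = ∑ z, ∑ y, X y z * ∑ a, P a x y * P a z w := by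
        simp only [Matrix.sum_apply, mul_apply, Finset.sum_mul, Finset.mul_sum]
        rw [Finset.sum_comm]
        refine Finset.sum_congr rfl fun z _ => ?_
        rw [Finset.sum_comm]
        exact Finset.sum_congr rfl fun y _ => Finset.sum_congr rfl fun a _ => by ring
    _ = ((c * X.trace) • (1 : Matrix n n R)) x w := by
        simp only [sum_mul_apply_of_sum_kronecker_self h]
        by_cases hxw : x = w <;>
          simp [hxw, trace, Finset.mul_sum, mul_comm, one_apply]

lemma sum_trace_smul_of_sum_kronecker_self (h : ∑ a, P a ⊗ₖ P a = c • swapMatrix n R)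
    (X : Matrix n n R) : ∑ a, (P a * X).trace • P a = c • X := by
  ext z w
  calc (∑ a, (P a * X).trace • P a) z w = ∑ x, ∑ y, X y x * ∑ a, P a x y * P a z w := by
        simp only [Matrix.sum_apply, Matrix.smul_apply, smul_eq_mul, trace, diag_apply, mul_apply,
          Finset.sum_mul, Finset.mul_sum]
        rw [Finset.sum_comm]
        refine Finset.sum_congr rfl fun x _ => ?_
        rw [Finset.sum_comm]
        exact Finset.sum_congr rfl fun y _ => Finset.sum_congr rfl fun a _ => by ring
    _ = (c • X) z w := by
        simp [sum_mul_apply_of_sum_kronecker_self h, ite_and, mul_comm]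

end Swap

section PauliOp

lemma conjTranspose_pauli1 (s : Fin 4) : (pauli1 s)ᴴ = pauli1 s := by
  fin_cases s <;> ext i j <;> fin_cases i <;> fin_cases j <;> simp [pauli1]

lemma pauli1_mul (s t : Fin 4) : ∃ c : ℂ, c ≠ 0 ∧ pauli1 s * pauli1 t = c • pauli1 (s ^^^ t) := by
  suffices h : ∃ c ∈ ({1, Complex.I, -Complex.I} : Set ℂ),
      pauli1 s * pauli1 t = c • pauli1 (s ^^^ t) by
    obtain ⟨c, rfl | rfl | rfl, h⟩ := h <;> exact ⟨_, by simp, h⟩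
  simp only [Set.mem_insert_iff, Set.mem_singleton_iff, exists_eq_or_imp, exists_eq_left]
  fin_cases s <;> fin_cases t <;> simp [pauli1, one_fin_two]

lemma pauli1_mul_comm (s t : Fin 4) :
    ∃ u : ℤˣ, pauli1 s * pauli1 t = (u : ℤ) • (pauli1 t * pauli1 s) := by
  suffices h : pauli1 s * pauli1 t = pauli1 t * pauli1 s ∨
      pauli1 s * pauli1 t = -(pauli1 t * pauli1 s) by
    rcases h with h | h
    · exact ⟨1, by simp [h]⟩
    · exact ⟨-1, by simp [h]⟩
  fin_cases s <;> fin_cases t <;> simp [pauli1]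

lemma pauli1_mul_self (s : Fin 4) : pauli1 s * pauli1 s = 1 := by
  fin_cases s <;> simp [pauli1, one_fin_two]

lemma trace_pauli1_mul (s t : Fin 4) :
    (pauli1 s * pauli1 t).trace = if s = t then 2 else 0 := by
  fin_cases s <;> fin_cases t <;> simp [pauli1, trace_fin_two, one_add_one_eq_two]

lemma sum_pauli1_mul_apply (i j k l : Fin 2) :
    ∑ s, pauli1 s i j * pauli1 s k l = if i = l ∧ j = k then 2 else 0 := by
  fin_cases i <;> fin_cases j <;> fin_cases k <;> fin_cases l <;>
    simp [pauli1, Fin.sum_univ_four, one_add_one_eq_two]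

variable {q : ℕ}

lemma pauliOp_eq_piKronecker (a : Fin q → Fin 4) :
    PauliOp a = piKronecker fun i => pauli1 (a i) := rfl

lemma conjTranspose_pauliOp (a : Fin q → Fin 4) : (PauliOp a)ᴴ = PauliOp a := by
  simp only [pauliOp_eq_piKronecker, conjTranspose_piKronecker, conjTranspose_pauli1]

lemma pauliOp_zero : PauliOp (0 : Fin q → Fin 4) = 1 := piKronecker_one

lemma pauliOp_mul (a b : Fin q → Fin 4) :
    ∃ c : ℂ, c ≠ 0 ∧ PauliOp a * PauliOp b = c • PauliOp fun i => a i ^^^ b i := by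
  choose c hc hmul using fun i => pauli1_mul (a i) (b i)
  refine ⟨∏ i, c i, Finset.prod_ne_zero_iff.2 fun i _ => hc i, ?_⟩
  simp only [pauliOp_eq_piKronecker, piKronecker_mul, hmul, piKronecker_smul]

lemma pauliOp_mul_comm_or (a b : Fin q → Fin 4) :
    PauliOp a * PauliOp b = PauliOp b * PauliOp a ∨
      PauliOp a * PauliOp b = -(PauliOp b * PauliOp a) := by
  choose u hu using fun i => pauli1_mul_comm (a i) (b i)
  have h : PauliOp a * PauliOp b = ((∏ i, u i : ℤˣ) : ℤ) • (PauliOp b * PauliOp a) := by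
    simp only [pauliOp_eq_piKronecker, piKronecker_mul, hu, piKronecker_smul, Units.coe_prod]
  rcases Int.units_eq_one_or (∏ i, u i) with hu | hu <;> simp [h, hu]

lemma pauliOp_mul_self (a : Fin q → Fin 4) : PauliOp a * PauliOp a = 1 := by
  simp only [pauliOp_eq_piKronecker, piKronecker_mul, pauli1_mul_self, piKronecker_one]

lemma trace_pauliOp_mul (a b : Fin q → Fin 4) :
    (PauliOp a * PauliOp b).trace = if a = b then 2 ^ q else 0 := by
  simp [pauliOp_eq_piKronecker, piKronecker_mul, trace_piKronecker, trace_pauli1_mul,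
    Fintype.prod_ite_zero, funext_iff]

lemma sum_pauliOp_kronecker_self :
    ∑ a : Fin q → Fin 4, PauliOp a ⊗ₖ PauliOp a = (2 ^ q : ℂ) • swapMatrix (Idx q) ℂ := by
  ext ⟨x, z⟩ ⟨y, w⟩
  calc (∑ a : Fin q → Fin 4, PauliOp a ⊗ₖ PauliOp a) (x, z) (y, w)
      = ∏ i, ∑ s, pauli1 s (x i) (y i) * pauli1 s (z i) (w i) := by
        simp only [Matrix.sum_apply, kroneckerMap_apply, pauliOp_eq_piKronecker,
          piKronecker_apply, ← Finset.prod_mul_distrib, Fintype.prod_sum]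
    _ = ((2 ^ q : ℂ) • swapMatrix (Idx q) ℂ) (x, z) (y, w) := by
        simp [sum_pauli1_mul_apply, Fintype.prod_ite_zero, swapMatrix_apply, funext_iff,
          forall_and, eq_comm]

end PauliOp

section SigmaHat

variable {q : ℕ} {σ τ : Mat q}

lemma sqrtd_mul_self : sqrtd q * sqrtd q = 2 ^ q := by
  rw [sqrtd, ← Complex.ofReal_mul, Real.mul_self_sqrt (by positivity)]
  push_cast
  rfl

lemma sqrtd_ne_zero : sqrtd q ≠ 0 :=
  mul_self_ne_zero.1 (sqrtd_mul_self ▸ pow_ne_zero q two_ne_zero)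

lemma inv_sqrtd_mul_self : (sqrtd q)⁻¹ * (sqrtd q)⁻¹ = (2 ^ q)⁻¹ := by
  rw [← mul_inv, sqrtd_mul_self]

/-- The normalized Pauli operator with labels `a`, so that `sigmaHat q` is the range of
`normPauli`. -/
def normPauli (a : Fin q → Fin 4) : Mat q := (sqrtd q)⁻¹ • PauliOp a

lemma sigmaHat_eq_range : sigmaHat q = Set.range normPauli := by
  ext M
  exact exists_congr fun a => eq_comm

lemma normPauli_mem_sigmaHat (a : Fin q → Fin 4) : normPauli a ∈ sigmaHat q := ⟨a, rfl⟩

lemma finite_sigmaHat : (sigmaHat q).Finite := by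
  rw [sigmaHat_eq_range]
  exact Set.finite_range _

lemma sigma0_eq_normPauli_zero : sigma0 q = normPauli 0 := by
  rw [sigma0, normPauli, pauliOp_zero]

lemma sigma0_mem_sigmaHat : sigma0 q ∈ sigmaHat q :=
  sigma0_eq_normPauli_zero ▸ normPauli_mem_sigmaHat 0

lemma trace_normPauli_zero_mul (X : Mat q) :
    (normPauli 0 * X).trace = (sqrtd q)⁻¹ * X.trace := by
  rw [← sigma0_eq_normPauli_zero, sigma0, smul_one_mul, trace_smul, smul_eq_mul]

lemma trace_normPauli_mul (a b : Fin q → Fin 4) :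
    (normPauli a * normPauli b).trace = if a = b then 1 else 0 := by
  rw [normPauli, normPauli, smul_mul_smul_comm, inv_sqrtd_mul_self, trace_smul,
    trace_pauliOp_mul]
  split_ifs <;> simp

lemma normPauli_injective : Function.Injective (normPauli (q := q)) := by
  intro a b hab
  by_contra hne
  have h := trace_normPauli_mul a b
  rw [if_neg hne, ← hab, trace_normPauli_mul, if_pos rfl] at h
  exact one_ne_zero h

lemma sum_normPauli_kronecker_self :
    ∑ a : Fin q → Fin 4, normPauli a ⊗ₖ normPauli a = swapMatrix (Idx q) ℂ := by
  simp only [normPauli, smul_kronecker, kronecker_smul, smul_smul, ← Finset.smul_sum,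
    inv_sqrtd_mul_self, sum_pauliOp_kronecker_self]
  rw [inv_mul_cancel₀ (pow_ne_zero q two_ne_zero), one_smul]

lemma conjTranspose_of_mem_sigmaHat (hσ : σ ∈ sigmaHat q) : σᴴ = σ := by
  obtain ⟨a, rfl⟩ := hσ
  simp [conjTranspose_smul, conjTranspose_pauliOp, sqrtd]

lemma mul_self_of_mem_sigmaHat (hσ : σ ∈ sigmaHat q) : σ * σ = (2 ^ q : ℂ)⁻¹ • 1 := by
  obtain ⟨a, rfl⟩ := hσ
  rw [smul_mul_smul_comm, inv_sqrtd_mul_self, pauliOp_mul_self]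

lemma mul_comm_or_of_mem_sigmaHat (hσ : σ ∈ sigmaHat q) (hτ : τ ∈ sigmaHat q) :
    σ * τ = τ * σ ∨ σ * τ = -(τ * σ) := by
  obtain ⟨a, rfl⟩ := hσ
  obtain ⟨b, rfl⟩ := hτ
  simp only [smul_mul_smul_comm, ← smul_neg]
  exact (pauliOp_mul_comm_or a b).imp (congrArg _) (congrArg _)

lemma exists_mul_eq_smul_of_mem_sigmaHat (hσ : σ ∈ sigmaHat q) (hτ : τ ∈ sigmaHat q) :
    ∃ c : ℂ, c ≠ 0 ∧ ∃ ρ ∈ sigmaHat q, σ * τ = c • ρ := by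
  obtain ⟨a, rfl⟩ := hσ
  obtain ⟨b, rfl⟩ := hτ
  obtain ⟨c, hc, h⟩ := pauliOp_mul a b
  refine ⟨(sqrtd q)⁻¹ * c, mul_ne_zero (inv_ne_zero sqrtd_ne_zero) hc,
    normPauli fun i => a i ^^^ b i, normPauli_mem_sigmaHat _, ?_⟩
  rw [smul_mul_smul_comm, h, normPauli, smul_smul, smul_smul, mul_right_comm]

lemma exists_normPauli_of_mem_sigmaSet (hσ : σ ∈ sigmaSet q) : ∃ a ≠ 0, normPauli a = σ := by
  obtain ⟨⟨a, rfl⟩, ha⟩ := hσ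
  refine ⟨a, ?_, rfl⟩
  rintro rfl
  exact ha sigma0_eq_normPauli_zero.symm

lemma normPauli_mem_sigmaSet {a : Fin q → Fin 4} (ha : a ≠ 0) : normPauli a ∈ sigmaSet q :=
  ⟨normPauli_mem_sigmaHat a, fun h => ha (normPauli_injective (h.trans sigma0_eq_normPauli_zero))⟩

lemma trace_of_mem_sigmaSet (hσ : σ ∈ sigmaSet q) : σ.trace = 0 := by
  obtain ⟨a, ha, rfl⟩ := exists_normPauli_of_mem_sigmaSet hσ
  have h := trace_normPauli_mul 0 a
  rw [trace_normPauli_zero_mul, if_neg ha.symm] at h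
  exact (mul_eq_zero.1 h).resolve_left (inv_ne_zero sqrtd_ne_zero)

end SigmaHat

section Clifford

variable {q : ℕ} {σ τ U : Mat q}

lemma sqrtd_smul_mul_self (hσ : σ ∈ sigmaHat q) : (sqrtd q • σ) * (sqrtd q • σ) = 1 := by
  rw [smul_mul_smul_comm, sqrtd_mul_self, mul_self_of_mem_sigmaHat hσ, smul_smul,
    mul_inv_cancel₀ (pow_ne_zero q two_ne_zero), one_smul]

lemma conjTranspose_sqrtd_smul (hσ : σ ∈ sigmaHat q) : (sqrtd q • σ)ᴴ = sqrtd q • σ := by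
  rw [conjTranspose_smul, conjTranspose_of_mem_sigmaHat hσ]
  simp [sqrtd]

lemma mem_cliff_of_involutive (hU : Uᴴ = U) (hUU : U * U = 1)
    (h : ∀ σ ∈ sigmaHat q, ∃ c : ℂ, ∃ τ ∈ sigmaHat q, U * σ * U = c • τ) : U ∈ Cliff q := by
  refine ⟨mem_unitaryGroup_iff.2 (by rwa [star_eq_conjTranspose, hU]), fun σ hσ => ?_⟩
  obtain ⟨c, τ, hτ, hc⟩ := h σ hσ
  have hsq : (c • τ) * (c • τ) = σ * σ := by
    rw [← hc, mul_self_of_mem_sigmaHat hσ]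
    calc U * σ * U * (U * σ * U) = U * (σ * (U * U) * σ) * U := by noncomm_ring
      _ = (2 ^ q : ℂ)⁻¹ • 1 := by
        rw [hUU, mul_one, mul_self_of_mem_sigmaHat hσ, mul_smul_comm, smul_mul_assoc, mul_one,
          hUU]
  have hcc : c * c = 1 := by
    rw [smul_mul_smul_comm, mul_self_of_mem_sigmaHat hσ, mul_self_of_mem_sigmaHat hτ,
      smul_smul, ← sub_eq_zero, ← sub_smul, ← sub_one_mul] at hsq
    have h1 := (smul_eq_zero.1 hsq).resolve_right one_ne_zero
    exact sub_eq_zero.1 ((mul_eq_zero.1 h1).resolve_right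
      (inv_ne_zero (pow_ne_zero q two_ne_zero)))
  refine ⟨τ, hτ, ?_⟩
  rw [hU, hc]
  rcases mul_self_eq_one_iff.1 hcc with rfl | rfl <;> simp

lemma sqrtd_smul_mem_cliff (hσ : σ ∈ sigmaHat q) : sqrtd q • σ ∈ Cliff q := by
  refine mem_cliff_of_involutive (conjTranspose_sqrtd_smul hσ) (sqrtd_smul_mul_self hσ)
    fun τ hτ => ?_
  have hconj : sqrtd q • σ * τ * sqrtd q • σ = (2 ^ q : ℂ) • (σ * τ * σ) := by
    rw [smul_mul_assoc, smul_mul_smul_comm, sqrtd_mul_self]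
  rw [hconj]
  rcases mul_comm_or_of_mem_sigmaHat hσ hτ with h | h
  · exact ⟨1, τ, hτ, by simp [h, mul_assoc, mul_self_of_mem_sigmaHat hσ]⟩
  · exact ⟨-1, τ, hτ, by simp [h, mul_assoc, mul_self_of_mem_sigmaHat hσ]⟩

lemma inv_sqrt_two_mul_self_mul_two : ((√2 : ℝ) : ℂ)⁻¹ * ((√2 : ℝ) : ℂ)⁻¹ * 2 = 1 := by
  rw [← mul_inv, ← Complex.ofReal_mul, Real.mul_self_sqrt zero_le_two, Complex.ofReal_ofNat,
    inv_mul_cancel₀ two_ne_zero]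

lemma exists_mul_sqrtd_smul_mul_eq_smul {ρ : Mat q} (hρ : ρ ∈ sigmaHat q) (hσ : σ ∈ sigmaHat q)
    (hτ : τ ∈ sigmaHat q) :
    ∃ c : ℂ, ∃ κ ∈ sigmaHat q, ρ * (sqrtd q • σ * sqrtd q • τ) = c • κ := by
  obtain ⟨a, -, ν, hν, hστ⟩ := exists_mul_eq_smul_of_mem_sigmaHat hσ hτ
  obtain ⟨b, -, κ, hκ, hρν⟩ := exists_mul_eq_smul_of_mem_sigmaHat hρ hν
  refine ⟨sqrtd q * sqrtd q * a * b, κ, hκ, ?_⟩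
  rw [smul_mul_smul_comm, hστ, smul_smul, mul_smul_comm, hρν, smul_smul]

lemma sqrtd_smul_mul_sqrtd_smul_of_anticommute (hστ : σ * τ = -(τ * σ)) :
    sqrtd q • σ * sqrtd q • τ = -(sqrtd q • τ * sqrtd q • σ) := by
  rw [smul_mul_smul_comm, hστ, smul_neg, smul_mul_smul_comm]

/-- The Clifford unitary `(P + Q) / √2`, where `P = √d σ` and `Q = √d τ`, which exchanges `P`
and `Q` when they anticommute. -/
def exchangeOp (σ τ : Mat q) : Mat q := ((√2 : ℝ) : ℂ)⁻¹ • (sqrtd q • σ + sqrtd q • τ)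

lemma conjTranspose_exchangeOp (hσ : σ ∈ sigmaHat q) (hτ : τ ∈ sigmaHat q) :
    (exchangeOp σ τ)ᴴ = exchangeOp σ τ := by
  rw [exchangeOp, conjTranspose_smul, conjTranspose_add, conjTranspose_sqrtd_smul hσ,
    conjTranspose_sqrtd_smul hτ]
  simp

lemma exchangeOp_mem_cliff (hσ : σ ∈ sigmaHat q) (hτ : τ ∈ sigmaHat q)
    (hστ : σ * τ = -(τ * σ)) : exchangeOp σ τ ∈ Cliff q := by
  have hs := inv_sqrt_two_mul_self_mul_two
  have hP := sqrtd_smul_mul_self hσ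
  have hQ := sqrtd_smul_mul_self hτ
  have hPQ := sqrtd_smul_mul_sqrtd_smul_of_anticommute hστ
  refine mem_cliff_of_involutive (conjTranspose_exchangeOp hσ hτ)
    (smul_add_mul_self_of_anticommute hs hP hQ hPQ) fun ρ hρ => ?_
  have comm_or {ν} (hν : ν ∈ sigmaHat q) : sqrtd q • ν * ρ = ρ * sqrtd q • ν ∨
      sqrtd q • ν * ρ = -(ρ * sqrtd q • ν) := by
    simp only [smul_mul_assoc, mul_smul_comm, ← smul_neg]
    exact (mul_comm_or_of_mem_sigmaHat hν hρ).imp (congrArg _) (congrArg _)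
  rcases smul_add_conj_mem_of_anticommute hs hP hQ hPQ (comm_or hσ) (comm_or hτ)
    with h | h | h | h <;> rw [exchangeOp, h]
  · exact ⟨1, ρ, hρ, (one_smul ℂ ρ).symm⟩
  · exact ⟨-1, ρ, hρ, (neg_one_smul ℂ ρ).symm⟩
  · exact exists_mul_sqrtd_smul_mul_eq_smul hρ hσ hτ
  · exact exists_mul_sqrtd_smul_mul_eq_smul hρ hτ hσ

lemma exchangeOp_conj (hσ : σ ∈ sigmaHat q) (hτ : τ ∈ sigmaHat q) (hστ : σ * τ = -(τ * σ)) :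
    exchangeOp σ τ * σ * (exchangeOp σ τ)ᴴ = τ := by
  have h : exchangeOp σ τ * sqrtd q • σ * exchangeOp σ τ = sqrtd q • τ :=
    smul_add_conj_of_anticommute inv_sqrt_two_mul_self_mul_two (sqrtd_smul_mul_self hσ)
      (sqrtd_smul_mul_self hτ) (sqrtd_smul_mul_sqrtd_smul_of_anticommute hστ)
  rw [mul_smul_comm, smul_mul_assoc] at h
  rw [conjTranspose_exchangeOp hσ hτ]
  exact (smul_right_inj sqrtd_ne_zero).1 h

end Clifford

section Traceless

variable {q : ℕ} {σ τ X : Mat q}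

/-- The traceless matrices, on which the Clifford group acts by conjugation: the space of the
adjoint representation. -/
def traceless (q : ℕ) : Submodule ℂ (Mat q) := LinearMap.ker (traceLinearMap (Idx q) ℂ ℂ)

lemma mem_traceless : X ∈ traceless q ↔ X.trace = 0 := Iff.rfl

lemma sum_normPauli_conj (X : Mat q) :
    ∑ a : Fin q → Fin 4, normPauli a * X * normPauli a = X.trace • 1 := by
  simpa using sum_conj_of_sum_kronecker_self (c := 1)
    (sum_normPauli_kronecker_self.trans (one_smul ℂ _).symm) X

lemma sum_trace_smul_normPauli (X : Mat q) :
    ∑ a : Fin q → Fin 4, (normPauli a * X).trace • normPauli a = X := by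
  simpa using sum_trace_smul_of_sum_kronecker_self (c := 1)
    (sum_normPauli_kronecker_self.trans (one_smul ℂ _).symm) X

lemma span_sigmaSet : Submodule.span ℂ (sigmaSet q) = traceless q := by
  refine le_antisymm (Submodule.span_le.2 fun σ hσ => trace_of_mem_sigmaSet hσ) fun X hX => ?_
  rw [← sum_trace_smul_normPauli X]
  refine Submodule.sum_mem _ fun a _ => ?_
  rcases eq_or_ne a 0 with rfl | ha
  · rw [trace_normPauli_zero_mul, mem_traceless.1 hX, mul_zero, zero_smul]
    exact Submodule.zero_mem _
  · exact Submodule.smul_mem _ _ (Submodule.subset_span (normPauli_mem_sigmaSet ha))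

lemma ne_zero_of_mem_sigmaHat (hσ : σ ∈ sigmaHat q) : σ ≠ 0 := by
  rintro rfl
  simpa using sqrtd_smul_mul_self hσ

lemma exists_anticommute_of_mem_sigmaSet (hσ : σ ∈ sigmaSet q) :
    ∃ ρ ∈ sigmaHat q, σ * ρ = -(ρ * σ) := by
  by_contra! h
  have hconj (a : Fin q → Fin 4) : normPauli a * σ * normPauli a = (2 ^ q : ℂ)⁻¹ • σ := by
    have ha := normPauli_mem_sigmaHat a
    rw [mul_assoc, (mul_comm_or_of_mem_sigmaHat hσ.1 ha).resolve_right (h _ ha), ← mul_assoc,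
      mul_self_of_mem_sigmaHat ha, smul_one_mul]
  have hsum := sum_normPauli_conj σ
  simp_rw [hconj] at hsum
  rw [trace_of_mem_sigmaSet hσ, zero_smul, Finset.sum_const, ← Nat.cast_smul_eq_nsmul ℂ,
    smul_smul] at hsum
  refine (smul_ne_zero (mul_ne_zero ?_ ?_) (ne_zero_of_mem_sigmaHat hσ.1)) hsum <;> simp

lemma exists_anticommute_pair (hσ : σ ∈ sigmaSet q) (hτ : τ ∈ sigmaSet q) :
    ∃ ρ ∈ sigmaHat q, σ * ρ = -(ρ * σ) ∧ ρ * τ = -(τ * ρ) := by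
  obtain ⟨μ, hμ, hσμ⟩ := exists_anticommute_of_mem_sigmaSet hσ
  obtain ⟨ν, hν, hτν⟩ := exists_anticommute_of_mem_sigmaSet hτ
  rcases mul_comm_or_of_mem_sigmaHat hμ hτ.1 with hμτ | hμτ
  · rcases mul_comm_or_of_mem_sigmaHat hσ.1 hν with hσν | hσν
    · obtain ⟨c, hc, ρ, hρ, h⟩ := exists_mul_eq_smul_of_mem_sigmaHat hμ hν
      refine ⟨ρ, hρ, (smul_right_inj hc).1 ?_, (smul_right_inj hc).1 ?_⟩
      · rw [smul_neg, ← mul_smul_comm, ← smul_mul_assoc, ← h]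
        linear_combination (norm := noncomm_ring) hσμ * ν - μ * hσν
      · rw [smul_neg, ← smul_mul_assoc, ← mul_smul_comm, ← h]
        linear_combination (norm := noncomm_ring) μ * hτν - hμτ * ν
    · exact ⟨ν, hν, hσν, by rw [hτν, neg_neg]⟩
  · exact ⟨μ, hμ, hσμ, hμτ⟩

variable {W : Submodule ℂ (Mat q)} (hW : ∀ U ∈ Cliff q, ∀ X ∈ W, U * X * Uᴴ ∈ W)
include hW

lemma mem_of_mem_of_conj_mem (hσ : σ ∈ sigmaSet q) (hτ : τ ∈ sigmaSet q) (h : σ ∈ W) :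
    τ ∈ W := by
  obtain ⟨ρ, hρ, hσρ, hρτ⟩ := exists_anticommute_pair hσ hτ
  rw [← exchangeOp_conj hρ hτ.1 hρτ]
  refine hW _ (exchangeOp_mem_cliff hρ hτ.1 hρτ) ρ ?_
  rw [← exchangeOp_conj hσ.1 hρ hσρ]
  exact hW _ (exchangeOp_mem_cliff hσ.1 hρ hσρ) σ h

lemma trace_smul_mem_of_conj_mem (hσ : σ ∈ sigmaHat q) (hX : X ∈ W) :
    (X * σ).trace • σ ∈ W := by
  have hconj (a : Fin q → Fin 4) : normPauli a * X * normPauli a ∈ W := by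
    have ha := normPauli_mem_sigmaHat a
    have h := hW _ (sqrtd_smul_mem_cliff ha) X hX
    rw [conjTranspose_sqrtd_smul ha, smul_mul_assoc, smul_mul_smul_comm] at h
    exact (W.smul_mem_iff (mul_ne_zero sqrtd_ne_zero sqrtd_ne_zero)).1 h
  rw [← smul_one_mul, ← sum_normPauli_conj, Finset.sum_mul]
  refine W.sum_mem fun a _ => ?_
  have hsq : normPauli a * (X * σ) * (σ * normPauli a) =
      (2 ^ q : ℂ)⁻¹ • (normPauli a * X * normPauli a) := by
    calc normPauli a * (X * σ) * (σ * normPauli a)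
        = normPauli a * (X * (σ * σ)) * normPauli a := by simp only [mul_assoc]
      _ = (2 ^ q : ℂ)⁻¹ • (normPauli a * X * normPauli a) := by
        rw [mul_self_of_mem_sigmaHat hσ, mul_smul_comm, mul_one, mul_smul_comm, smul_mul_assoc]
  rcases mul_comm_or_of_mem_sigmaHat (normPauli_mem_sigmaHat a) hσ with h | h
  · rw [mul_assoc, h, hsq]
    exact W.smul_mem _ (hconj a)
  · rw [mul_assoc, h, mul_neg, hsq]
    exact W.neg_mem (W.smul_mem _ (hconj a))

theorem eq_bot_or_eq_traceless_of_conj_mem (hle : W ≤ traceless q) :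
    W = ⊥ ∨ W = traceless q := by
  refine or_iff_not_imp_left.2 fun hbot => le_antisymm hle ?_
  obtain ⟨X, hX, hX0⟩ := W.ne_bot_iff.1 hbot
  obtain ⟨a, ha⟩ : ∃ a : Fin q → Fin 4, (normPauli a * X).trace ≠ 0 := by
    by_contra! h
    refine hX0 ?_
    rw [← sum_trace_smul_normPauli X]
    simp [h]
  have haW : normPauli a ∈ W := by
    have h := trace_smul_mem_of_conj_mem hW (normPauli_mem_sigmaHat a) hX
    rw [trace_mul_comm] at h
    exact (W.smul_mem_iff ha).1 h
  have haS : normPauli a ∈ sigmaSet q := by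
    refine normPauli_mem_sigmaSet ?_
    rintro rfl
    exact ha (by rw [trace_normPauli_zero_mul, mem_traceless.1 (hle hX), mul_zero])
  rw [← span_sigmaSet, Submodule.span_le]
  exact fun τ hτ => mem_of_mem_of_conj_mem hW haS hτ haW

end Traceless

section LegSum

variable {n R : Type*} [DecidableEq n] [CommRing R]

/-- The linear map `A ↦ s (1 ⊗ A) + t (A ⊗ 1)`, which places a matrix on the two legs of a tensor
square with weights `s` and `t`. -/
def legSum (s t : R) : Matrix n n R →ₗ[R] Matrix (n × n) (n × n) R :=
  s • kroneckerBilinear (R := R) 1 + t • (kroneckerBilinear (R := R)).flip 1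

lemma legSum_apply (s t : R) (A : Matrix n n R) :
    legSum s t A = s • (1 ⊗ₖ A) + t • (A ⊗ₖ 1) := rfl

variable [Fintype n]

lemma swapMatrix_mul_legSum (s t : R) (A : Matrix n n R) :
    swapMatrix n R * legSum s t A = legSum t s A * swapMatrix n R := by
  simp only [legSum_apply, mul_add, add_mul, mul_smul_comm, smul_mul_assoc,
    swapMatrix_mul_kronecker]
  exact add_comm _ _

lemma kronecker_self_mul_legSum (s t : R) (A B : Matrix n n R) :
    (B ⊗ₖ B) * legSum s t A = s • (B ⊗ₖ (B * A)) + t • ((B * A) ⊗ₖ B) := by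
  simp only [legSum_apply, mul_add, mul_smul_comm, ← mul_kronecker_mul, mul_one]

lemma legSum_mul_kronecker_self (s t : R) (A B : Matrix n n R) :
    legSum s t A * (B ⊗ₖ B) = s • (B ⊗ₖ (A * B)) + t • ((A * B) ⊗ₖ B) := by
  simp only [legSum_apply, add_mul, smul_mul_assoc, ← mul_kronecker_mul, one_mul]

lemma kronecker_self_conj_legSum [StarRing R] {U : Matrix n n R} (hU : U ∈ unitaryGroup n R)
    (s t : R) (A : Matrix n n R) :
    (U ⊗ₖ U) * legSum s t A * (U ⊗ₖ U)ᴴ = legSum s t (U * A * Uᴴ) := by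
  have hUU : U * Uᴴ = 1 := mem_unitaryGroup_iff.1 hU
  rw [kronecker_self_mul_legSum, conjTranspose_kronecker]
  simp only [add_mul, smul_mul_assoc, ← mul_kronecker_mul, hUU, legSum_apply]

lemma legSum_eq_zero_iff [NoZeroDivisors R] [CharZero R] [Nonempty n] {s t : R}
    (hst : s ≠ 0 ∨ t ≠ 0) {A : Matrix n n R} (hA : A.trace = 0) :
    legSum s t A = 0 ↔ A = 0 := by
  refine ⟨fun h => ext_iff_trace_mul_left.2 fun B => ?_, fun h => h ▸ map_zero _⟩
  have hcard : (Fintype.card n : R) ≠ 0 := Nat.cast_ne_zero.2 Fintype.card_ne_zero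
  rw [mul_zero, trace_zero]
  rcases hst with hs | ht
  · have hB := congrArg (fun M => ((1 ⊗ₖ B) * M).trace) h
    simpa [legSum_apply, mul_add, ← mul_kronecker_mul, trace_kronecker, hA, hs, hcard] using hB
  · have hB := congrArg (fun M => ((B ⊗ₖ 1) * M).trace) h
    simpa [legSum_apply, mul_add, ← mul_kronecker_mul, trace_kronecker, hA, ht, hcard] using hB

end LegSum

section AdjointEmbedding

variable {q : ℕ} {F G : Mat q →ₗ[ℂ] BMat q} {U X : Mat q}

lemma conj_mem_traceless (hU : U ∈ Cliff q) (hX : X ∈ traceless q) :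
    U * X * Uᴴ ∈ traceless q := by
  have hUU : Uᴴ * U = 1 := mem_unitaryGroup_iff'.1 hU.1
  rw [mem_traceless, trace_mul_cycle, hUU, one_mul, mem_traceless.1 hX]

lemma traceless_ne_bot (hq : q ≠ 0) : traceless q ≠ ⊥ := by
  have : NeZero q := ⟨hq⟩
  obtain ⟨a, ha⟩ := exists_ne (0 : Fin q → Fin 4)
  have hmem := normPauli_mem_sigmaSet ha
  exact (Submodule.ne_bot_iff _).2
    ⟨_, trace_of_mem_sigmaSet hmem, ne_zero_of_mem_sigmaHat hmem.1⟩

/-- A linear map under which the adjoint representation of the Clifford group on traceless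
matrices embeds into the two-copy representation. -/
structure IsAdjointEmbedding (F : Mat q →ₗ[ℂ] BMat q) : Prop where
  twoCopy_apply : ∀ U ∈ Cliff q, ∀ X, twoCopy U (F X) = F (U * X * Uᴴ)
  disjoint_ker : Disjoint (traceless q) (LinearMap.ker F)

namespace IsAdjointEmbedding

lemma eq_zero_of_apply_eq_zero (hF : IsAdjointEmbedding F) (hX : X ∈ traceless q)
    (h : F X = 0) : X = 0 :=
  LinearMap.disjoint_ker.1 hF.disjoint_ker X hX h

lemma isInvariant (hF : IsAdjointEmbedding F) : IsInvariant q ((traceless q).map F) := by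
  rintro U hU _ ⟨X, hX, rfl⟩
  exact ⟨_, conj_mem_traceless hU hX, (hF.twoCopy_apply U hU X).symm⟩

lemma carriesIrred (hq : q ≠ 0) (hF : IsAdjointEmbedding F) :
    CarriesIrred q ((traceless q).map F) := by
  refine ⟨fun h => traceless_ne_bot hq ?_, hF.isInvariant, fun W hW hinv => ?_⟩
  · exact hF.disjoint_ker.eq_bot_of_le (LinearMap.le_ker_iff_map.2 h)
  · have hmap : (traceless q ⊓ W.comap F).map F = W := by
      rw [← Submodule.map_inf_eq_map_inf_comap, inf_eq_right.2 hW]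
    have hconj : ∀ U ∈ Cliff q, ∀ X ∈ traceless q ⊓ W.comap F,
        U * X * Uᴴ ∈ traceless q ⊓ W.comap F := fun U hU X hX =>
      ⟨conj_mem_traceless hU hX.1, by
        simpa only [SetLike.mem_coe, Submodule.mem_comap, hF.twoCopy_apply U hU X]
          using hinv U hU _ hX.2⟩
    rw [← hmap]
    refine (eq_bot_or_eq_traceless_of_conj_mem hconj inf_le_left).imp (fun h => ?_) fun h => ?_
    · rw [h, Submodule.map_bot]
    · rw [h]

lemma equivRep (hF : IsAdjointEmbedding F) (hG : IsAdjointEmbedding G) :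
    EquivRep q ((traceless q).map F) ((traceless q).map G) := by
  obtain ⟨L, hL⟩ := LinearMap.exists_leftInverse_of_injective (F.domRestrict (traceless q))
    (LinearMap.ker_eq_bot.2 (LinearMap.injective_domRestrict_iff.2 hF.disjoint_ker))
  have hLF {X : Mat q} (hX : X ∈ traceless q) : (L (F X) : Mat q) = X :=
    congrArg Subtype.val (LinearMap.congr_fun hL ⟨X, hX⟩)
  refine ⟨G ∘ₗ (traceless q).subtype ∘ₗ L, ?_, ?_, ?_⟩
  · rw [← Submodule.map_comp]
    ext M
    exact exists_congr fun X => and_congr_right fun hX => by simp [hLF hX]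
  · rintro _ ⟨X, hX, rfl⟩ h
    simp only [LinearMap.comp_apply, Submodule.subtype_apply, hLF hX] at h
    rw [hG.eq_zero_of_apply_eq_zero hX h, map_zero]
  · rintro U hU _ ⟨X, hX, rfl⟩
    simp only [LinearMap.comp_apply, Submodule.subtype_apply, hLF hX, hF.twoCopy_apply U hU,
      hLF (conj_mem_traceless hU hX), hG.twoCopy_apply U hU]

lemma mulLeft_comp {M : BMat q} (hM : IsUnit M) (hcomm : ∀ U ∈ Cliff q, Commute (U ⊗ₖ U) M)
    (hF : IsAdjointEmbedding F) : IsAdjointEmbedding (LinearMap.mulLeft ℂ M ∘ₗ F) where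
  twoCopy_apply U hU X := by
    rw [LinearMap.comp_apply, LinearMap.comp_apply, LinearMap.mulLeft_apply,
      LinearMap.mulLeft_apply, ← hF.twoCopy_apply U hU X]
    change (U ⊗ₖ U) * (M * F X) * (U ⊗ₖ U)ᴴ = M * ((U ⊗ₖ U) * F X * (U ⊗ₖ U)ᴴ)
    rw [← mul_assoc, (hcomm U hU).eq, mul_assoc, mul_assoc, mul_assoc]
  disjoint_ker := LinearMap.disjoint_ker.2 fun X hX h =>
    hF.eq_zero_of_apply_eq_zero hX (hM.mul_right_eq_zero.1 h)

end IsAdjointEmbedding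

lemma isAdjointEmbedding_legSum {s t : ℂ} (hst : s ≠ 0 ∨ t ≠ 0) :
    IsAdjointEmbedding (legSum s t : Mat q →ₗ[ℂ] BMat q) where
  twoCopy_apply _ hU X := kronecker_self_conj_legSum hU.1 s t X
  disjoint_ker := LinearMap.disjoint_ker.2 fun _ hX h => (legSum_eq_zero_iff hst hX).1 h

end AdjointEmbedding

section DiagonalSum

instance isAddTorsionFree_matrix {m n R : Type*} [AddMonoid R] [IsAddTorsionFree R] :
    IsAddTorsionFree (Matrix m n R) :=
  inferInstanceAs (IsAddTorsionFree (m → n → R))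

variable {q : ℕ} {σ τ : Mat q}

lemma mem_NSet_iff (hτ : τ ∈ sigmaHat q) :
    σ ∈ NSet τ ↔ σ ∈ sigmaHat q ∧ σ * τ = -(τ * σ) := by
  refine ⟨fun h => ⟨h.1.1, eq_neg_of_add_eq_zero_left h.2⟩,
    fun ⟨hσ, h⟩ => ⟨⟨hσ, ?_⟩, by rw [h, neg_add_cancel]⟩⟩
  rintro rfl
  rw [sigma0, smul_one_mul, mul_smul_one, self_eq_neg] at h
  exact ne_zero_of_mem_sigmaHat hτ ((smul_eq_zero.1 h).resolve_left (inv_ne_zero sqrtd_ne_zero))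

lemma CHatSet_union_NSet (hτ : τ ∈ sigmaHat q) : CHatSet τ ∪ NSet τ = sigmaHat q := by
  ext σ
  rw [Set.mem_union, mem_NSet_iff hτ]
  exact ⟨fun h => h.elim And.left And.left, fun hσ =>
    (mul_comm_or_of_mem_sigmaHat hσ hτ).imp (And.intro hσ) (And.intro hσ)⟩

lemma disjoint_CHatSet_NSet (hτ : τ ∈ sigmaHat q) : Disjoint (CHatSet τ) (NSet τ) := by
  refine Set.disjoint_left.2 fun σ hC hN => ?_
  obtain ⟨hσ, h⟩ := (mem_NSet_iff hτ).1 hN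
  rw [hC.2, self_eq_neg] at h
  have hστ : sqrtd q • σ * sqrtd q • τ = 0 := by rw [smul_mul_smul_comm, hC.2, h, smul_zero]
  have h1 : sqrtd q • σ * (sqrtd q • σ * sqrtd q • τ) * sqrtd q • τ = 1 := by
    rw [← mul_assoc, sqrtd_smul_mul_self hσ, one_mul, sqrtd_smul_mul_self hτ]
  rw [hστ, mul_zero, zero_mul] at h1
  exact zero_ne_one h1

lemma CHatSet_eq_insert (hτ : τ ∈ sigmaSet q) :
    CHatSet τ = insert (sigma0 q) (insert τ (CSet τ)) := by
  ext σ
  constructor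
  · rintro ⟨hσ, h⟩
    by_cases h0 : σ = sigma0 q
    · exact .inl h0
    · by_cases hστ : σ = τ
      · exact .inr (.inl hστ)
      · exact .inr (.inr ⟨⟨hσ, h0⟩, hστ, h⟩)
  · rintro (rfl | rfl | h)
    · exact ⟨sigma0_mem_sigmaHat, by rw [sigma0, smul_one_mul, mul_smul_one]⟩
    · exact ⟨hτ.1, rfl⟩
    · exact ⟨h.1.1, h.2.2⟩

/-- The diagonal tensor `∑ σ ⊗ σ` over a set of matrices. -/
def diagSum (S : Set (Mat q)) : BMat q := ∑ᶠ σ ∈ S, σ ⊗ₖ σ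

lemma diagSum_sigmaHat : diagSum (sigmaHat q) = swapMatrix (Idx q) ℂ := by
  rw [diagSum, sigmaHat_eq_range, finsum_mem_range normPauli_injective,
    finsum_eq_sum_of_fintype, sum_normPauli_kronecker_self]

lemma finite_CHatSet : (CHatSet τ).Finite := finite_sigmaHat.subset fun _ h => h.1

lemma finite_CSet : (CSet τ).Finite := finite_sigmaHat.subset fun _ h => h.1.1

lemma finite_NSet : (NSet τ).Finite := finite_sigmaHat.subset fun _ h => h.1.1

lemma diagSum_CHatSet_add_diagSum_NSet (hτ : τ ∈ sigmaHat q) :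
    diagSum (CHatSet τ) + diagSum (NSet τ) = swapMatrix (Idx q) ℂ := by
  rw [← diagSum_sigmaHat, ← CHatSet_union_NSet hτ]
  exact (finsum_mem_union (disjoint_CHatSet_NSet hτ) finite_CHatSet finite_NSet).symm

lemma diagSum_CHatSet (hτ : τ ∈ sigmaSet q) :
    diagSum (CHatSet τ) = sigma0 q ⊗ₖ sigma0 q + (τ ⊗ₖ τ + diagSum (CSet τ)) := by
  have h0 : sigma0 q ∉ insert τ (CSet τ) := by
    rintro (h | h)
    · exact hτ.2 h.symm
    · exact h.1.2 rfl
  rw [diagSum, CHatSet_eq_insert hτ, finsum_mem_insert _ h0 (finite_CSet.insert τ),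
    finsum_mem_insert _ (fun h => h.2.1 rfl) finite_CSet, diagSum]

lemma diagSum_mul {S : Set (Mat q)} (hS : S.Finite) (K : BMat q) :
    diagSum S * K = ∑ᶠ σ ∈ S, (σ ⊗ₖ σ) * K := (AddMonoidHom.mulRight K).map_finsum_mem _ hS

lemma mul_diagSum {S : Set (Mat q)} (hS : S.Finite) (K : BMat q) :
    K * diagSum S = ∑ᶠ σ ∈ S, K * (σ ⊗ₖ σ) := (AddMonoidHom.mulLeft K).map_finsum_mem _ hS

variable {s t : ℂ}

lemma diagSum_CHatSet_mul_legSum :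
    diagSum (CHatSet τ) * legSum s t τ = legSum s t τ * diagSum (CHatSet τ) := by
  rw [diagSum_mul finite_CHatSet, mul_diagSum finite_CHatSet]
  refine finsum_mem_congr rfl fun σ hσ => ?_
  rw [kronecker_self_mul_legSum, legSum_mul_kronecker_self, hσ.2]

lemma diagSum_NSet_mul_legSum (hτ : τ ∈ sigmaHat q) :
    diagSum (NSet τ) * legSum s t τ = -(legSum s t τ * diagSum (NSet τ)) := by
  rw [diagSum_mul finite_NSet, mul_diagSum finite_NSet, ← finsum_mem_neg_distrib _ finite_NSet]
  refine finsum_mem_congr rfl fun σ hσ => ?_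
  rw [kronecker_self_mul_legSum, legSum_mul_kronecker_self, ((mem_NSet_iff hτ).1 hσ).2]
  ext ⟨i, j⟩ ⟨k, l⟩
  simp [add_comm]

/-- `legSum s s τ` commutes with `SWAP = ∑_Ĉ + ∑_N` and with `∑_Ĉ` but anticommutes with `∑_N`, so
it is annihilated by `∑_N`; with weights `s` and `-s` the roles are exchanged. -/
lemma diagSum_CHatSet_mul_legSum_eq_swapMatrix_mul (hτ : τ ∈ sigmaHat q) :
    diagSum (CHatSet τ) * legSum s s τ = swapMatrix (Idx q) ℂ * legSum s s τ := by
  have hsum := diagSum_CHatSet_add_diagSum_NSet hτ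
  have hswap := swapMatrix_mul_legSum s s τ
  have hC := diagSum_CHatSet_mul_legSum (τ := τ) (s := s) (t := s)
  have hN := diagSum_NSet_mul_legSum (s := s) (t := s) hτ
  rw [← hsum] at hswap ⊢
  have h2 : 2 • (diagSum (NSet τ) * legSum s s τ) = 0 := by
    linear_combination (norm := noncomm_ring) hswap - hC + hN
  rw [add_mul, (smul_eq_zero.1 h2).resolve_left two_ne_zero, add_zero]

lemma diagSum_NSet_mul_legSum_eq_swapMatrix_mul (hτ : τ ∈ sigmaHat q) :
    diagSum (NSet τ) * legSum s (-s) τ = swapMatrix (Idx q) ℂ * legSum s (-s) τ := by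
  have hsum := diagSum_CHatSet_add_diagSum_NSet hτ
  have hneg : legSum (-s) s τ = -legSum s (-s) τ := by
    simp only [legSum_apply, neg_smul, neg_add, neg_neg]
  have hswap := swapMatrix_mul_legSum s (-s) τ
  have hC := diagSum_CHatSet_mul_legSum (τ := τ) (s := s) (t := -s)
  have hN := diagSum_NSet_mul_legSum (s := s) (t := -s) hτ
  rw [hneg] at hswap
  rw [← hsum] at hswap ⊢
  have h2 : 2 • (diagSum (CHatSet τ) * legSum s (-s) τ) = 0 := by
    linear_combination (norm := noncomm_ring) hswap + hC - hN
  rw [add_mul, (smul_eq_zero.1 h2).resolve_left two_ne_zero, zero_add]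

lemma diagSum_CSet_mul_legSum (hτ : τ ∈ sigmaSet q) :
    diagSum (CSet τ) * legSum s s τ =
      (swapMatrix (Idx q) ℂ - (2 * (2 ^ q : ℂ)⁻¹) • 1) * legSum s s τ := by
  have h0 : (sigma0 q ⊗ₖ sigma0 q) * legSum s s τ = (2 ^ q : ℂ)⁻¹ • legSum s s τ := by
    rw [sigma0, smul_kronecker, kronecker_smul, smul_smul, inv_sqrtd_mul_self, one_kronecker_one,
      smul_one_mul]
  have hself : (τ ⊗ₖ τ) * legSum s s τ = (2 ^ q : ℂ)⁻¹ • legSum s s τ := by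
    rw [kronecker_self_mul_legSum, mul_self_of_mem_sigmaHat hτ.1, kronecker_smul, smul_kronecker,
      legSum_apply, smul_add, smul_comm s, smul_comm s, add_comm]
  have h := diagSum_CHatSet_mul_legSum_eq_swapMatrix_mul (s := s) hτ.1
  rw [diagSum_CHatSet hτ, add_mul, add_mul, h0, hself] at h
  rw [sub_mul, smul_one_mul, ← h, two_mul, add_smul]
  abel

end DiagonalSum

section Sectors

lemma isUnit_sub_smul_one {K R : Type*} [Field K] [Ring R] [Algebra K R] {x : R} {c : K}
    (hx : x * x = 1) (hc : c * c ≠ 1) : IsUnit (x - c • 1) := by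
  have hxc : Commute x (c • 1) := (Commute.one_right x).smul_right c
  have hcomm : Commute (x - c • 1) (x + c • 1) :=
    ((Commute.refl x).add_right hxc).sub_left (hxc.symm.add_right (Commute.refl _))
  have hmul : (x - c • 1) * (x + c • 1) = (1 - c * c) • 1 := by
    rw [← hxc.mul_self_sub_mul_self_eq', hx, smul_mul_smul_comm, one_mul, sub_smul, one_smul]
  refine (hcomm.isUnit_mul_iff.1 ?_).1
  rw [hmul, ← Algebra.algebraMap_eq_smul_one]
  exact (sub_ne_zero.2 hc.symm).isUnit.map (algebraMap K R)

variable {q : ℕ} {σ τ : Mat q} {S : Set (Mat q)}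

lemma isUnit_swapMatrix_sub (hq : q ≠ 1) :
    IsUnit (swapMatrix (Idx q) ℂ - (2 * (2 ^ q : ℂ)⁻¹) • 1) := by
  refine isUnit_sub_smul_one swapMatrix_mul_self fun h => hq ?_
  have hpow : (2 ^ (q + q) : ℂ) = 2 ^ 2 := by
    field_simp at h
    linear_combination -h
  have hexp : q + q = 2 := Nat.pow_right_injective le_rfl (by exact_mod_cast hpow)
  lia

lemma SVec_nprod (σ τ : Mat q) :
    SVec σ (nprod σ τ) = (((√2 : ℝ) : ℂ)⁻¹ * sqrtd q) • ((σ ⊗ₖ σ) * legSum 1 1 τ) := by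
  rw [SVec, nprod, kronecker_self_mul_legSum, kronecker_smul, smul_kronecker, ← smul_add,
    smul_smul, one_smul, one_smul]

lemma AVec_nprod (σ τ : Mat q) : AVec σ (Complex.I • nprod σ τ) =
    (((√2 : ℝ) : ℂ)⁻¹ * (Complex.I * sqrtd q)) • ((σ ⊗ₖ σ) * legSum 1 (-1) τ) := by
  rw [AVec, nprod, kronecker_self_mul_legSum, smul_smul, kronecker_smul, smul_kronecker,
    ← smul_sub, smul_smul, one_smul, neg_one_smul, sub_eq_add_neg]

lemma finsum_mem_smul_kronecker_self_mul (hS : S.Finite) (c : ℂ) (K : BMat q) :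
    ∑ᶠ σ ∈ S, c • ((σ ⊗ₖ σ) * K) = c • (diagSum S * K) := by
  rw [diagSum_mul hS]
  exact ((DistribSMul.toAddMonoidHom (BMat q) c).map_finsum_mem _ hS).symm

lemma inv_sqrt_two_mul_ncard_ne_zero (hS : S.Finite) (h : diagSum S ≠ 0) :
    ((√(2 * (S.ncard : ℝ)) : ℝ) : ℂ)⁻¹ ≠ 0 := by
  have hne : S.Nonempty := Set.nonempty_iff_ne_empty.2 fun he => h <| by
    rw [he, diagSum, finsum_mem_empty]
  have hpos : 0 < S.ncard := (Set.ncard_pos hS).2 hne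
  exact inv_ne_zero (Complex.ofReal_ne_zero.2 (by positivity))

lemma span_eq_map_traceless {F : Mat q →ₗ[ℂ] BMat q} {v : Mat q → BMat q}
    (h : ∀ τ ∈ sigmaSet q, ∃ c : ℂ, c ≠ 0 ∧ v τ = c • F τ) :
    Submodule.span ℂ {M | ∃ τ ∈ sigmaSet q, M = v τ} = (traceless q).map F := by
  rw [← span_sigmaSet, Submodule.map_span]
  refine le_antisymm (Submodule.span_le.2 ?_) (Submodule.span_le.2 ?_)
  · rintro _ ⟨τ, hτ, rfl⟩
    obtain ⟨c, -, hc⟩ := h τ hτ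
    rw [hc]
    exact Submodule.smul_mem _ _ (Submodule.subset_span ⟨τ, hτ, rfl⟩)
  · rintro _ ⟨τ, hτ, rfl⟩
    obtain ⟨c, hc0, hc⟩ := h τ hτ
    refine (Submodule.smul_mem_iff _ hc0).1 ?_
    rw [← hc]
    exact Submodule.subset_span ⟨τ, hτ, rfl⟩

/-- The embedding `A ↦ (SWAP - 2/d) (1 ⊗ A + A ⊗ 1)` of the adjoint representation, with image
`VadjS q`. -/
def symmEmbedding (q : ℕ) : Mat q →ₗ[ℂ] BMat q :=
  LinearMap.mulLeft ℂ (swapMatrix (Idx q) ℂ - (2 * (2 ^ q : ℂ)⁻¹) • 1) ∘ₗ legSum 1 1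

/-- The embedding `A ↦ SWAP (1 ⊗ A - A ⊗ 1)` of the adjoint representation, with image
`VadjA q`. -/
def antisymmEmbedding (q : ℕ) : Mat q →ₗ[ℂ] BMat q :=
  LinearMap.mulLeft ℂ (swapMatrix (Idx q) ℂ) ∘ₗ legSum 1 (-1)

lemma isAdjointEmbedding_symmEmbedding (hq : q ≠ 1) : IsAdjointEmbedding (symmEmbedding q) :=
  (isAdjointEmbedding_legSum (.inl one_ne_zero)).mulLeft_comp (isUnit_swapMatrix_sub hq)
    fun U _ => (commute_kronecker_self_swapMatrix U).sub_right
      ((Commute.one_right _).smul_right _)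

lemma isAdjointEmbedding_antisymmEmbedding : IsAdjointEmbedding (antisymmEmbedding q) :=
  (isAdjointEmbedding_legSum (.inl one_ne_zero)).mulLeft_comp isUnit_swapMatrix
    fun U _ => commute_kronecker_self_swapMatrix U

lemma diagSum_CSet_mul_legSum_one (hτ : τ ∈ sigmaSet q) :
    diagSum (CSet τ) * legSum 1 1 τ = symmEmbedding q τ := diagSum_CSet_mul_legSum hτ

lemma diagSum_NSet_mul_legSum_one (hτ : τ ∈ sigmaHat q) :
    diagSum (NSet τ) * legSum 1 (-1) τ = antisymmEmbedding q τ :=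
  diagSum_NSet_mul_legSum_eq_swapMatrix_mul hτ

lemma Vr_eq : Vr q = (traceless q).map (legSum 1 0) :=
  span_eq_map_traceless fun τ _ => ⟨(sqrtd q)⁻¹, inv_ne_zero sqrtd_ne_zero, by
    simp [sigma0, legSum_apply, smul_kronecker]⟩

lemma Vl_eq : Vl q = (traceless q).map (legSum 0 1) :=
  span_eq_map_traceless fun τ _ => ⟨(sqrtd q)⁻¹, inv_ne_zero sqrtd_ne_zero, by
    simp [sigma0, legSum_apply, kronecker_smul]⟩

lemma vadjS_eq (τ : Mat q) : vadjS τ =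
    (((√(2 * ((CSet τ).ncard : ℝ)) : ℝ) : ℂ)⁻¹ * (((√2 : ℝ) : ℂ)⁻¹ * sqrtd q)) •
      (diagSum (CSet τ) * legSum 1 1 τ) := by
  simp only [vadjS, SVec_nprod, finsum_mem_smul_kronecker_self_mul finite_CSet, smul_smul]

lemma vadjA_eq (τ : Mat q) : vadjA τ =
    (((√(2 * ((NSet τ).ncard : ℝ)) : ℝ) : ℂ)⁻¹ * (((√2 : ℝ) : ℂ)⁻¹ * (Complex.I * sqrtd q))) •
      (diagSum (NSet τ) * legSum 1 (-1) τ) := by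
  simp only [vadjA, AVec_nprod, finsum_mem_smul_kronecker_self_mul finite_NSet, smul_smul]

lemma diagSum_ne_zero_of_mul_eq {F : Mat q →ₗ[ℂ] BMat q} (hF : IsAdjointEmbedding F)
    (hτ : τ ∈ sigmaSet q) {K : BMat q} (h : diagSum S * K = F τ) : diagSum S ≠ 0 := fun h0 =>
  ne_zero_of_mem_sigmaHat hτ.1 <|
    hF.eq_zero_of_apply_eq_zero (trace_of_mem_sigmaSet hτ) <| by rw [← h, h0, zero_mul]

lemma VadjS_eq (hq : q ≠ 1) : VadjS q = (traceless q).map (symmEmbedding q) := by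
  refine span_eq_map_traceless fun τ hτ => ?_
  have hsum := diagSum_CSet_mul_legSum_one hτ
  have hne := diagSum_ne_zero_of_mul_eq (isAdjointEmbedding_symmEmbedding hq) hτ hsum
  refine ⟨_, ?_, (vadjS_eq τ).trans (congrArg _ hsum)⟩
  exact mul_ne_zero (inv_sqrt_two_mul_ncard_ne_zero finite_CSet hne)
    (mul_ne_zero (by simp) sqrtd_ne_zero)

lemma VadjA_eq : VadjA q = (traceless q).map (antisymmEmbedding q) := by
  refine span_eq_map_traceless fun τ hτ => ?_
  have hsum := diagSum_NSet_mul_legSum_one hτ.1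
  have hne := diagSum_ne_zero_of_mul_eq isAdjointEmbedding_antisymmEmbedding hτ hsum
  refine ⟨_, ?_, (vadjA_eq τ).trans (congrArg _ hsum)⟩
  exact mul_ne_zero (inv_sqrt_two_mul_ncard_ne_zero finite_NSet hne)
    (mul_ne_zero (by simp) (mul_ne_zero Complex.I_ne_zero sqrtd_ne_zero))

end Sectors

/-- Lemma: adjoint representations: `V_r`, `V_l`, `V_[adj]`, `V_{adj}`
are invariant and carry pairwise equivalent irreducible subrepresentations. -/
theorem statement7 (q : ℕ) (hq : 2 ≤ q) :
    IsInvariant q (Vr q) ∧ IsInvariant q (Vl q) ∧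
    IsInvariant q (VadjS q) ∧ IsInvariant q (VadjA q) ∧
    CarriesIrred q (Vr q) ∧ CarriesIrred q (Vl q) ∧
    CarriesIrred q (VadjS q) ∧ CarriesIrred q (VadjA q) ∧
    EquivRep q (Vr q) (Vl q) ∧ EquivRep q (Vr q) (VadjS q) ∧
    EquivRep q (Vr q) (VadjA q) ∧ EquivRep q (Vl q) (VadjS q) ∧
    EquivRep q (Vl q) (VadjA q) ∧ EquivRep q (VadjS q) (VadjA q) := by
  have hq0 : q ≠ 0 := by lia
  have hq1 : q ≠ 1 := by lia
  have hR := isAdjointEmbedding_legSum (q := q) (s := 1) (t := 0) (.inl one_ne_zero)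
  have hL := isAdjointEmbedding_legSum (q := q) (s := 0) (t := 1) (.inr one_ne_zero)
  have hS := isAdjointEmbedding_symmEmbedding hq1
  have hA := isAdjointEmbedding_antisymmEmbedding (q := q)
  rw [Vr_eq, Vl_eq, VadjS_eq hq1, VadjA_eq]
  exact ⟨hR.isInvariant, hL.isInvariant, hS.isInvariant, hA.isInvariant,
    hR.carriesIrred hq0, hL.carriesIrred hq0, hS.carriesIrred hq0, hA.carriesIrred hq0,
    hR.equivRep hL, hR.equivRep hS, hR.equivRep hA, hL.equivRep hS, hL.equivRep hA,
    hS.equivRep hA⟩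

end CliffordPaper
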